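/- arXiv:0909.3881 — 3 statements merged into one kernel-verified Lean document; each statement's English description precedes it below -/
import Mathlib

section
/- Let k and m be natural numbers with m < k. Then there exists a constant c_k > 0 such that for every C^k function f : ℝ → ℝ satisfying f(x + 2π) = f(x) for all x ∈ ℝ, one has sup_{θ ∈ ℝ} |f^{(m)}(θ)| ≤ c_k · ( ∫₀^{2π} f(θ)² dθ + ∫₀^{2π} (f^{(k)}(θ))² dθ )^{1/2}, i.e. ‖f^{(m)}‖_{L^∞} ≤ c_k ‖f‖_{H^k}. -/
/-!
The oscillation of a periodic `C¹` function `g` is controlled by its derivative: writing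
`g x - g y` as the integral of `g'` over a piece of one period, Cauchy–Schwarz gives
`(g x - g y)² ≤ 2π ∫ g'²` (`sq_sub_le_integral_deriv`). The derivative of a periodic function
vanishes somewhere by Rolle, so its oscillation bounds its sup norm; iterating,
`(g x - g y)² ≤ (2π)^(2n+1) ∫ (g^(n+1))²` (`sq_sub_le_integral_iteratedDeriv`).

For `m ≥ 1` this is applied to `g = f^(m)`, with `y` a zero of `f^(m)`. For `m = 0` it is applied
to `f`, with `y` a point where `f²` is at most its mean value, which brings in the `L²` norm of `f`.
-/

/-- Cauchy–Schwarz oscillation bound over one period. -/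
lemma sq_sub_le_integral_deriv (g : ℝ → ℝ) (hg : ContDiff ℝ 1 g)
    (hp : Function.Periodic g (2 * Real.pi)) (x y : ℝ) :
    (g x - g y) ^ 2 ≤ 2 * Real.pi * ∫ t in (0:ℝ)..(2 * Real.pi), (deriv g t) ^ 2 := by
  have hpi : 0 < 2 * Real.pi := Real.two_pi_pos
  obtain ⟨z, hz, hxz⟩ := hp.exists_mem_Ico hpi x y
  rw [hxz]
  have hc : Continuous (deriv g) := hg.continuous_deriv le_rfl
  have hd : ∀ t, HasDerivAt g (deriv g t) t := fun t =>
    (hg.differentiable one_ne_zero t).hasDerivAt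
  have hftc : ∫ t in y..z, deriv g t = g z - g y :=
    intervalIntegral.integral_eq_sub_of_hasDerivAt (fun t _ => hd t)
      (hc.intervalIntegrable _ _)
  have hdp : Function.Periodic (fun t => (deriv g t) ^ 2) (2 * Real.pi) := by
    intro t
    have : deriv g (t + 2 * Real.pi) = deriv g t := by
      rw [← deriv_comp_add_const, funext hp]
    simp only [this]
  have hshift : ∫ t in y..(y + 2 * Real.pi), (deriv g t) ^ 2
      = ∫ t in (0:ℝ)..(2 * Real.pi), (deriv g t) ^ 2 := by
    have := hdp.intervalIntegral_add_eq y 0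
    rwa [zero_add] at this
  have hmono : ∫ t in y..z, (deriv g t) ^ 2
      ≤ ∫ t in (0:ℝ)..(2 * Real.pi), (deriv g t) ^ 2 := by
    rw [← hshift]
    exact intervalIntegral.integral_mono_interval le_rfl hz.1 hz.2.le
      (Filter.Eventually.of_forall fun t => sq_nonneg _)
      ((hc.pow 2).intervalIntegrable _ _)
  set D := g z - g y with hD
  set A := ∫ t in (0:ℝ)..(2 * Real.pi), (deriv g t) ^ 2
  set s := D / (2 * Real.pi) with hs
  -- Cauchy–Schwarz comes from `0 ≤ ∫ (g' - s)²` with the optimal constant `s = D / (2π)`.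
  have h0 : 0 ≤ ∫ t in y..z, (deriv g t - s) ^ 2 :=
    intervalIntegral.integral_nonneg hz.1 fun t _ => sq_nonneg _
  have hexp : ∫ t in y..z, (deriv g t - s) ^ 2
      = (∫ t in y..z, (deriv g t) ^ 2) - 2 * s * D + (z - y) * s ^ 2 := by
    have : ∀ t, (deriv g t - s) ^ 2 = (deriv g t) ^ 2 - 2 * s * deriv g t + s ^ 2 := by
      intro t; ring
    simp only [this]
    have i1 : IntervalIntegrable (fun t => (deriv g t) ^ 2) MeasureTheory.volume y z :=
      (hc.pow 2).intervalIntegrable _ _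
    have i2 : IntervalIntegrable (fun t => 2 * s * deriv g t) MeasureTheory.volume y z :=
      (continuous_const.mul hc).intervalIntegrable _ _
    have i3 : IntervalIntegrable (fun _ : ℝ => s ^ 2) MeasureTheory.volume y z :=
      continuous_const.intervalIntegrable _ _
    rw [intervalIntegral.integral_add (i1.sub i2) i3, intervalIntegral.integral_sub i1 i2,
      intervalIntegral.integral_const_mul, hftc, intervalIntegral.integral_const, smul_eq_mul]
  have hDs : D = 2 * Real.pi * s := by rw [hs]; field_simp
  have hlen : (z - y) * s ^ 2 ≤ 2 * Real.pi * s ^ 2 :=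
    mul_le_mul_of_nonneg_right (by linarith [hz.2]) (sq_nonneg s)
  have hA : 2 * Real.pi * s ^ 2 ≤ A := by
    rw [hexp, hDs] at h0
    nlinarith
  calc D ^ 2 = 2 * Real.pi * (2 * Real.pi * s ^ 2) := by rw [hDs]; ring
    _ ≤ _ := mul_le_mul_of_nonneg_left hA hpi.le

lemma periodic_iteratedDeriv {f : ℝ → ℝ} {c : ℝ} (hp : Function.Periodic f c) (n : ℕ) :
    Function.Periodic (iteratedDeriv n f) c := by
  intro t
  rw [← congrFun (iteratedDeriv_comp_add_const n f c) t, funext hp]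

lemma exists_deriv_eq_zero_of_periodic {g : ℝ → ℝ} (hg : Continuous g)
    (hp : Function.Periodic g (2 * Real.pi)) : ∃ z, deriv g z = 0 := by
  obtain ⟨z, -, hz⟩ := exists_deriv_eq_zero (f := g) Real.two_pi_pos hg.continuousOn
    (by simpa using (hp 0).symm)
  exact ⟨z, hz⟩

/-- Oscillation bound by a higher derivative; the inductive step uses that `deriv g` has a zero,
so that its oscillation bounds its values. -/
lemma sq_sub_le_integral_iteratedDeriv (n : ℕ) : ∀ g : ℝ → ℝ, ContDiff ℝ (n + 1 : ℕ) g →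
    Function.Periodic g (2 * Real.pi) → ∀ x y : ℝ,
    (g x - g y) ^ 2 ≤ (2 * Real.pi) ^ (2 * n + 1) *
      ∫ t in (0:ℝ)..(2 * Real.pi), (iteratedDeriv (n + 1) g t) ^ 2 := by
  have hpi : 0 < 2 * Real.pi := Real.two_pi_pos
  induction n with
  | zero =>
    intro g hg hp x y
    simpa using sq_sub_le_integral_deriv g (by simpa using hg) hp x y
  | succ n ih =>
    intro g hg hp x y
    have hg1 : ContDiff ℝ 1 g := hg.of_le (by exact_mod_cast Nat.succ_le_succ (Nat.zero_le _))
    have hg' : ContDiff ℝ (n + 1 : ℕ) (deriv g) := by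
      have h : ContDiff ℝ (((n + 1 : ℕ) : WithTop ℕ∞) + 1) g := by exact_mod_cast hg
      exact (contDiff_succ_iff_deriv.1 h).2.2
    have hp' : Function.Periodic (deriv g) (2 * Real.pi) := by
      simpa using periodic_iteratedDeriv hp 1
    obtain ⟨z, hz⟩ := exists_deriv_eq_zero_of_periodic hg1.continuous hp
    set N := ∫ t in (0:ℝ)..(2 * Real.pi), (iteratedDeriv (n + 1 + 1) g t) ^ 2 with hN
    have hb : ∀ t, (deriv g t) ^ 2 ≤ (2 * Real.pi) ^ (2 * n + 1) * N := by
      intro t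
      have := ih (deriv g) hg' hp' t z
      rwa [hz, sub_zero, ← iteratedDeriv_succ'] at this
    have hI : ∫ t in (0:ℝ)..(2 * Real.pi), (deriv g t) ^ 2
        ≤ 2 * Real.pi * ((2 * Real.pi) ^ (2 * n + 1) * N) := by
      have := intervalIntegral.integral_mono_on (μ := MeasureTheory.volume) hpi.le
        ((hg'.continuous.pow 2).intervalIntegrable _ _)
        (continuous_const.intervalIntegrable _ _) (fun t _ => hb t)
      simpa only [Pi.pow_apply, intervalIntegral.integral_const, sub_zero, smul_eq_mul] using this
    calc (g x - g y) ^ 2 ≤ _ := sq_sub_le_integral_deriv g hg1 hp x y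
      _ ≤ 2 * Real.pi * (2 * Real.pi * ((2 * Real.pi) ^ (2 * n + 1) * N)) :=
        mul_le_mul_of_nonneg_left hI hpi.le
      _ = _ := by ring

/-- A continuous function has a point where its square is at most the mean of its square. -/
lemma exists_two_pi_mul_sq_le {f : ℝ → ℝ} (hf : Continuous f) :
    ∃ y, 2 * Real.pi * (f y) ^ 2 ≤ ∫ t in (0:ℝ)..(2 * Real.pi), (f t) ^ 2 := by
  have hpi : 0 < 2 * Real.pi := Real.two_pi_pos
  obtain ⟨y, -, hy⟩ := isCompact_Icc.exists_isMinOn (Set.nonempty_Icc.2 hpi.le)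
    (hf.pow 2).continuousOn
  refine ⟨y, ?_⟩
  have := intervalIntegral.integral_mono_on (μ := MeasureTheory.volume) hpi.le
    (continuous_const.intervalIntegrable _ _)
    ((hf.pow 2).intervalIntegrable _ _) (fun t ht => isMinOn_iff.1 hy t ht)
  simpa using this

/-- Theorem 2.5 (2): for `m < k` there is a constant `c_k > 0` such that every `2π`-periodic
`C^k` function `f` satisfies `‖f^{(m)}‖_{L^∞} ≤ c_k ‖f‖_{H^k}`. -/
theorem sobolev_embedding (k m : ℕ) (hmk : m < k) :
    ∃ c : ℝ, 0 < c ∧ ∀ f : ℝ → ℝ, ContDiff ℝ (k : ℕ∞) f →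
      (∀ x : ℝ, f (x + 2 * Real.pi) = f x) →
      ∀ θ : ℝ, |iteratedDeriv m f θ| ≤
        c * Real.sqrt ((∫ θ in (0:ℝ)..(2 * Real.pi), (f θ) ^ 2) +
          ∫ θ in (0:ℝ)..(2 * Real.pi), (iteratedDeriv k f θ) ^ 2) := by
  obtain ⟨n, rfl⟩ : ∃ n, k = n + 1 + m := ⟨k - m - 1, by omega⟩
  have hpi : 0 < 2 * Real.pi := Real.two_pi_pos
  set C := (2 * Real.pi) ^ (2 * n + 1) with hC
  have hCpos : 0 < C := pow_pos hpi _
  -- The constant covers `u² ≤ 2 v² + 2 (u - v)²`, needed when `m = 0`.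
  refine ⟨Real.sqrt (2 + 2 * C), Real.sqrt_pos.2 (by positivity), ?_⟩
  intro f hf hp θ
  rw [← Real.sqrt_mul (by positivity)]
  apply Real.abs_le_sqrt
  have hN0 : 0 ≤ ∫ t in (0:ℝ)..(2 * Real.pi), (f t) ^ 2 :=
    intervalIntegral.integral_nonneg hpi.le fun t _ => sq_nonneg _
  have hNk : 0 ≤ ∫ t in (0:ℝ)..(2 * Real.pi), (iteratedDeriv (n + 1 + m) f t) ^ 2 :=
    intervalIntegral.integral_nonneg hpi.le fun t _ => sq_nonneg _
  have hf' : ContDiff ℝ ((n + 1 + m : ℕ) : WithTop ℕ∞) f := by exact_mod_cast hf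
  have hgm : ContDiff ℝ (n + 1 : ℕ) (iteratedDeriv m f) := by
    rw [iteratedDeriv_eq_iterate]
    exact ContDiff.iterate_deriv' (n + 1) m hf'
  have hcomp : iteratedDeriv (n + 1) (iteratedDeriv m f) = iteratedDeriv (n + 1 + m) f := by
    simp only [iteratedDeriv_eq_iterate, Function.iterate_add_apply]
  have key := sq_sub_le_integral_iteratedDeriv n _ hgm (periodic_iteratedDeriv hp m) θ
  rw [hcomp, ← hC] at key
  set N0 := ∫ t in (0:ℝ)..(2 * Real.pi), (f t) ^ 2
  set Nk := ∫ t in (0:ℝ)..(2 * Real.pi), (iteratedDeriv (n + 1 + m) f t) ^ 2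
  have hCN0 := mul_nonneg hCpos.le hN0
  have hCNk := mul_nonneg hCpos.le hNk
  obtain ⟨y, hy⟩ : ∃ y, (iteratedDeriv m f y) ^ 2 ≤ N0 := by
    cases m with
    | zero =>
      obtain ⟨y, hy⟩ := exists_two_pi_mul_sq_le hf.continuous
      refine ⟨y, ?_⟩
      rw [iteratedDeriv_zero]
      nlinarith [sq_nonneg (f y), Real.pi_gt_three]
    | succ j =>
      have hcj : Continuous (iteratedDeriv j f) :=
        hf'.continuous_iteratedDeriv j (by exact_mod_cast (by omega : j ≤ n + 1 + (j + 1)))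
      obtain ⟨y, hy⟩ := exists_deriv_eq_zero_of_periodic hcj (periodic_iteratedDeriv hp j)
      refine ⟨y, ?_⟩
      rw [iteratedDeriv_succ, hy]
      simpa using hN0
  have hk := key y
  nlinarith [sq_nonneg (iteratedDeriv m f θ - 2 * iteratedDeriv m f y)]
end

section
/- Let k be a natural number, let λ : ℤ → (0, ∞) satisfy λ(-n) = λ(n) for all n and lim_{|n|→∞} |n|^j λ(n) = 0 for every natural number j, and for n ∈ ℤ let ê_n : ℝ → ℝ be defined by ê_n(θ) = λ(n) cos(nθ) for n ≥ 0 and ê_n(θ) = λ(n) sin(nθ) for n < 0. Then for every C^k function f : ℝ → ℝ satisfying f(x + 2π) = f(x) for all x, the series ∑_{n ∈ ℤ} ‖ê_n ∘ (id + f)‖_{H^k}² converges, where ê_n ∘ (id + f) is the function θ ↦ ê_n(θ + f(θ)) and ‖g‖_{H^k}² = ∫₀^{2π} g(θ)² dθ + ∫₀^{2π} (g^{(k)}(θ))² dθ. -/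
/-!
The argument is that `ê_n ∘ (id + f)` has `k`-th derivative of size at most
`C * λ(n) * (1 + |n|) ^ k`, uniformly on `[0, 2π]`, with `C` depending only on `k` and `f`.
The Faà di Bruno bound `norm_iteratedFDeriv_comp_le` gives this: each derivative of `ê_n` of order
at most `k` is bounded by `λ(n) * (1 + |n|) ^ k`, and the derivatives of `id + f` of order at
most `k` are bounded on the compact interval `[0, 2π]`. Both integrals are therefore at most a
constant times `(λ(n) * (1 + |n|) ^ k) ^ 2`, which is summable because `|n| ^ (k + 1) * λ(n)` is
eventually at most `1`, making it `O(1 / n ^ 2)`.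
-/

/-- One constant `D ≥ 1` bounds all derivatives of order at most `k` on `[a, b]`. -/
lemma exists_bound_iteratedFDeriv {k : ℕ} {u : ℝ → ℝ} (hu : ContDiff ℝ k u) (a b : ℝ) :
    ∃ D : ℝ, 1 ≤ D ∧ ∀ i ≤ k, ∀ x ∈ Set.Icc a b, ‖iteratedFDeriv ℝ i u x‖ ≤ D := by
  have h : ∀ i : ℕ, ∃ B : ℝ, i ≤ k → ∀ x ∈ Set.Icc a b, ‖iteratedFDeriv ℝ i u x‖ ≤ B := by
    intro i
    by_cases hi : i ≤ k
    · obtain ⟨B, hB⟩ := isCompact_Icc.exists_bound_of_continuousOn (s := Set.Icc a b)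
        (hu.continuous_iteratedFDeriv (m := i) (by exact_mod_cast hi)).continuousOn
      exact ⟨B, fun _ => hB⟩
    · exact ⟨0, fun h => absurd h hi⟩
  choose B hB using h
  refine ⟨1 + ∑ i ∈ Finset.range (k + 1), |B i|, ?_, fun i hi x hx => ?_⟩
  · have : 0 ≤ ∑ i ∈ Finset.range (k + 1), |B i| := Finset.sum_nonneg fun _ _ => abs_nonneg _
    linarith
  · have h1 : |B i| ≤ ∑ i ∈ Finset.range (k + 1), |B i| :=
      Finset.single_le_sum (f := fun i => |B i|) (fun _ _ => abs_nonneg _)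
        (Finset.mem_range.2 (by omega))
    linarith [hB i hi x hx, le_abs_self (B i)]

/-- The Faà di Bruno bound for `θ ↦ c * h (m * u θ)`, where all derivatives of `h` are bounded
by `1` (as for `cos` and `sin`). -/
lemma abs_iteratedDeriv_comp_le {k : ℕ} {u h : ℝ → ℝ} (hu : ContDiff ℝ k u)
    (hh : ∀ n : ℕ, ContDiff ℝ n h) (hb : ∀ i x, |iteratedDeriv i h x| ≤ 1)
    {c : ℝ} (hc : 0 ≤ c) (m : ℝ) {D x : ℝ} (hD1 : 1 ≤ D)
    (hD : ∀ i ≤ k, ‖iteratedFDeriv ℝ i u x‖ ≤ D) :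
    |iteratedDeriv k (fun θ => c * h (m * u θ)) x|
      ≤ k.factorial * (c * (1 + |m|) ^ k) * D ^ k := by
  have hg : ContDiff ℝ k (fun y => c * h (m * y)) :=
    contDiff_const.mul ((hh k).comp (contDiff_const.mul contDiff_id))
  have key := norm_iteratedFDeriv_comp_le (n := k) hg hu le_rfl x (C := c * (1 + |m|) ^ k)
    (D := D) ?_ ?_
  · rwa [norm_iteratedFDeriv_eq_norm_iteratedDeriv, Real.norm_eq_abs] at key
  · intro i hi
    rw [norm_iteratedFDeriv_eq_norm_iteratedDeriv, Real.norm_eq_abs,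
      iteratedDeriv_const_mul_field, iteratedDeriv_comp_const_mul (hh i)]
    have h1 : |m| ^ i ≤ (1 + |m|) ^ k :=
      (pow_le_pow_left₀ (abs_nonneg m) (by linarith) i).trans
        (pow_le_pow_right₀ (by linarith [abs_nonneg m]) hi)
    rw [abs_mul, abs_of_nonneg hc, abs_mul, abs_pow]
    gcongr
    calc _ ≤ |m| ^ i * 1 := by gcongr; exact hb _ _
      _ ≤ _ := by simpa using h1
  · intro i hi1 hi
    exact (hD i hi).trans (le_self_pow₀ hD1 (by omega))

lemma summable_sq_weight (k : ℕ) {lam : ℤ → ℝ} (hpos : ∀ n : ℤ, 0 < lam n)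
    (hdecay : ∀ j : ℕ, Filter.Tendsto (fun n : ℤ => (|n| : ℝ) ^ j * lam n)
      Filter.cofinite (nhds 0)) :
    Summable (fun n : ℤ => (lam n * (1 + |(n : ℝ)|) ^ k) ^ 2) := by
  have hs : Summable (fun n : ℤ => (2 ^ k) ^ 2 * (1 / (n : ℝ) ^ 2)) :=
    (Real.summable_one_div_int_pow.2 one_lt_two).mul_left _
  refine Summable.of_norm_bounded_eventually hs ?_
  filter_upwards [(hdecay (k + 1)).eventually_le_const one_pos,
    (Set.finite_singleton (0 : ℤ)).compl_mem_cofinite] with n hn hn0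
  have hn0 : n ≠ 0 := hn0
  have h1 : (1 : ℝ) ≤ |(n : ℝ)| := by exact_mod_cast Int.one_le_abs hn0
  have h2 : lam n * (1 + |(n : ℝ)|) ^ k ≤ 2 ^ k * (1 / |(n : ℝ)|) := by
    calc lam n * (1 + |(n : ℝ)|) ^ k ≤ lam n * (2 * |(n : ℝ)|) ^ k := by
          have := (hpos n).le
          gcongr
          linarith
      _ = 2 ^ k * (|(n : ℝ)| ^ k * lam n) := by rw [mul_pow]; ring
      _ ≤ 2 ^ k * (1 / |(n : ℝ)|) := by
          gcongr
          rw [le_div_iff₀ (by linarith)]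
          calc _ = |(n : ℝ)| ^ (k + 1) * lam n := by ring
            _ ≤ 1 := hn
  have h0 : 0 ≤ lam n * (1 + |(n : ℝ)|) ^ k := by have := (hpos n).le; positivity
  rw [Real.norm_eq_abs, abs_of_nonneg (sq_nonneg _)]
  calc _ ≤ (2 ^ k * (1 / |(n : ℝ)|)) ^ 2 := by gcongr
    _ = _ := by rw [mul_pow, div_pow, sq_abs, one_pow]


/-- Proposition 2.7: for a rapidly decreasing `λ : ℤ → (0,∞)` with basis functions
`ê_n(θ) = λ(n)cos(nθ)` (`n ≥ 0`), `ê_n(θ) = λ(n)sin(nθ)` (`n < 0`), and any `2π`-periodic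
`C^k` function `f`, the series `∑_{n∈ℤ} ‖ê_n ∘ (id + f)‖²_{H^k}` converges, i.e. the operator
`Φ(f) : g ↦ g ∘ (id + f)` is Hilbert–Schmidt from `H_λ` to `H^k`. -/
theorem Phi_hilbertSchmidt (k : ℕ) (lam : ℤ → ℝ)
    (hpos : ∀ n : ℤ, 0 < lam n) (heven : ∀ n : ℤ, lam (-n) = lam n)
    (hdecay : ∀ j : ℕ, Filter.Tendsto (fun n : ℤ => (|n| : ℝ) ^ j * lam n)
      Filter.cofinite (nhds 0))
    (f : ℝ → ℝ) (hf : ContDiff ℝ (k : ℕ∞) f)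
    (hper : ∀ x : ℝ, f (x + 2 * Real.pi) = f x) :
    Summable (fun n : ℤ =>
      (∫ θ in (0:ℝ)..(2 * Real.pi),
        ((if 0 ≤ n then lam n * Real.cos (n * (θ + f θ))
          else lam n * Real.sin (n * (θ + f θ)))) ^ 2) +
      ∫ θ in (0:ℝ)..(2 * Real.pi),
        (iteratedDeriv k (fun θ : ℝ =>
          if 0 ≤ n then lam n * Real.cos (n * (θ + f θ))
          else lam n * Real.sin (n * (θ + f θ))) θ) ^ 2) := by
  have hu : ContDiff ℝ k (fun θ : ℝ => θ + f θ) := contDiff_id.add (by exact_mod_cast hf)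
  obtain ⟨D, hD1, hD⟩ := exists_bound_iteratedFDeriv hu 0 (2 * Real.pi)
  have hpi := Real.two_pi_pos
  have hw : ∀ n : ℤ, lam n ≤ lam n * (1 + |(n : ℝ)|) ^ k := fun n =>
    le_mul_of_one_le_right (hpos n).le (one_le_pow₀ (by linarith [abs_nonneg (n : ℝ)]))
  refine Summable.of_norm_bounded (((summable_sq_weight k hpos hdecay).mul_left
    ((1 + (k.factorial * D ^ k) ^ 2) * (2 * Real.pi)))) fun n => ?_
  have hmem : ∀ θ ∈ Set.uIoc (0 : ℝ) (2 * Real.pi), θ ∈ Set.Icc (0 : ℝ) (2 * Real.pi) :=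
    fun θ hθ => by
      rw [Set.uIoc_of_le hpi.le] at hθ
      exact Set.Ioc_subset_Icc_self hθ
  have hn := (hpos n).le
  -- `norm_integral_le_of_norm_le_const` asks for no integrability of the integrands.
  have I1 := intervalIntegral.norm_integral_le_of_norm_le_const (a := 0) (b := 2 * Real.pi)
    (f := fun θ => (if 0 ≤ n then lam n * Real.cos (n * (θ + f θ))
          else lam n * Real.sin (n * (θ + f θ))) ^ 2)
    (C := (lam n * (1 + |(n : ℝ)|) ^ k) ^ 2) (fun θ _ => by
      rw [norm_pow, Real.norm_eq_abs]
      gcongr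
      refine le_trans ?_ (hw n)
      split_ifs
      · rw [abs_mul, abs_of_nonneg hn]
        exact mul_le_of_le_one_right hn (Real.abs_cos_le_one _)
      · rw [abs_mul, abs_of_nonneg hn]
        exact mul_le_of_le_one_right hn (Real.abs_sin_le_one _))
  have I2 := intervalIntegral.norm_integral_le_of_norm_le_const (a := 0) (b := 2 * Real.pi)
    (f := fun θ => (iteratedDeriv k (fun θ : ℝ =>
          if 0 ≤ n then lam n * Real.cos (n * (θ + f θ))
          else lam n * Real.sin (n * (θ + f θ))) θ) ^ 2)
    (C := (k.factorial * (lam n * (1 + |(n : ℝ)|) ^ k) * D ^ k) ^ 2) (fun θ hθ => by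
      rw [norm_pow, Real.norm_eq_abs]
      gcongr
      have hDθ := fun i hi => hD i hi θ (hmem θ hθ)
      split_ifs
      · exact abs_iteratedDeriv_comp_le hu (fun _ => Real.contDiff_cos)
          (fun i x => Real.abs_iteratedDeriv_cos_le_one i x) hn n hD1 hDθ
      · exact abs_iteratedDeriv_comp_le hu (fun _ => Real.contDiff_sin)
          (fun i x => Real.abs_iteratedDeriv_sin_le_one i x) hn n hD1 hDθ)
  rw [sub_zero, abs_of_pos hpi] at I1 I2
  refine (norm_add_le _ _).trans ((add_le_add I1 I2).trans (le_of_eq ?_))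
  ring
end

section
/- Let k be a natural number. There exists a constant K > 0 (depending only on k) such that for every real c > 0, every n ∈ ℤ, and every C^k function f : ℝ → ℝ satisfying f(x + 2π) = f(x) for all x, the k-th derivative of the function θ ↦ c·cos(n(θ + f(θ))) satisfies ( ∫₀^{2π} ( d^k/dθ^k [ c·cos(n(θ + f(θ))) ] )² dθ )^{1/2} ≤ K · c · (1 + |n|)^k · (1 + ‖f‖_{H^k})^k, where ‖f‖_{H^k}² = ∫₀^{2π} f(θ)² dθ + ∫₀^{2π} (f^{(k)}(θ))² dθ. -/
/-!
Write `g = id + f`. By Faà di Bruno, the `k`-th derivative of `c cos (n g)` is a sum over ordered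
partitions of `Fin k` of terms `φ^{(l)}(g) ∏ g^{(p_j)}`, where `φ x = c cos (n x)` satisfies
`|φ^{(l)}| ≤ c (1 + |n|)^k` for `l ≤ k`.

For `1 ≤ j < k` the function `f^{(j)}` has a zero in a period (Rolle, by periodicity of
`f^{(j-1)}`), so it is bounded by the `L¹` norm of `f^{(j+1)}`. Iterating up to order `k` and
finishing with Cauchy-Schwarz gives `|f^{(j)}| ≤ (2π)^k ‖f^{(k)}‖_{L²}`
(`abs_iteratedDeriv_le`). Hence every partition without a part of size `k` contributes a
uniformly bounded product. The only partition with a part of size `k` has a single part and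
contributes `g^{(k)}`, which is controlled in `L²`.
-/

/-- Cauchy-Schwarz against the constant function on an interval of length `T`. -/
lemma integral_abs_le_sqrt {T : ℝ} (hT : 0 < T) {u : ℝ → ℝ} (hu : Continuous u) :
    ∫ x in (0:ℝ)..T, |u x| ≤ Real.sqrt T * Real.sqrt (∫ x in (0:ℝ)..T, (u x) ^ 2) := by
  set I := ∫ x in (0:ℝ)..T, |u x| with hI
  rw [← Real.sqrt_mul hT.le]
  apply Real.le_sqrt_of_sq_le
  -- The variance of `|u|` is nonnegative.
  have h : 0 ≤ ∫ x in (0:ℝ)..T, (|u x| - I / T) ^ 2 :=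
    intervalIntegral.integral_nonneg hT.le fun x _ => sq_nonneg _
  have e : ∫ x in (0:ℝ)..T, (|u x| - I / T) ^ 2
      = (∫ x in (0:ℝ)..T, (u x) ^ 2) - 2 * (I / T) * I + T * (I / T) ^ 2 := by
    have : (fun x => (|u x| - I / T) ^ 2)
        = fun x => ((u x) ^ 2 - 2 * (I / T) * |u x|) + (I / T) ^ 2 := by
      funext x
      rw [← sq_abs (u x)]
      ring
    rw [this, intervalIntegral.integral_add, intervalIntegral.integral_sub,
      intervalIntegral.integral_const_mul, ← hI]
    · simp
    all_goals exact Continuous.intervalIntegrable (by fun_prop) _ _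
  rw [e] at h
  have h2 : (∫ x in (0:ℝ)..T, (u x) ^ 2) - 2 * (I / T) * I + T * (I / T) ^ 2
      = (∫ x in (0:ℝ)..T, (u x) ^ 2) - I ^ 2 / T := by
    field_simp
    ring
  rw [h2, sub_nonneg, div_le_iff₀ hT] at h
  linarith

/-- A function with a zero in `[0, T]` is bounded there by the `L¹` norm of its derivative. -/
lemma abs_le_integral_of_zero {T : ℝ} (hT : 0 < T) {h h' : ℝ → ℝ}
    (hd : ∀ x, HasDerivAt h (h' x) x) (hc : Continuous h') {z : ℝ} (hz : z ∈ Set.Icc 0 T)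
    (h0 : h z = 0) {x : ℝ} (hx : x ∈ Set.Icc 0 T) :
    |h x| ≤ ∫ y in (0:ℝ)..T, |h' y| := by
  have e : ∫ y in z..x, h' y = h x := by
    rw [intervalIntegral.integral_eq_sub_of_hasDerivAt (fun y _ => hd y)
      (hc.intervalIntegrable _ _), h0, sub_zero]
  rw [← e]
  have h1 := intervalIntegral.norm_integral_le_abs_integral_norm (f := h') (a := z) (b := x)
    (μ := MeasureTheory.volume)
  have h2 : |(∫ y in z..x, |h' y|)| ≤ |(∫ y in (0:ℝ)..T, |h' y|)| := by
    apply intervalIntegral.abs_integral_mono_interval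
    · apply Set.uIoc_subset_uIoc_of_uIcc_subset_uIcc
      rw [Set.uIcc_of_le hT.le]
      exact Set.uIcc_subset_Icc hz hx
    · exact Filter.Eventually.of_forall fun y => abs_nonneg _
    · exact Continuous.intervalIntegrable (by fun_prop) _ _
  rw [abs_of_nonneg (a := ∫ y in (0:ℝ)..T, |h' y|)
    (intervalIntegral.integral_nonneg hT.le fun y _ => abs_nonneg _)] at h2
  simp only [Real.norm_eq_abs] at h1
  exact h1.trans h2

/-- The intermediate derivatives of a periodic function are controlled uniformly by the `L²` norm
of its top derivative. The parameter `d` counts the derivatives separating order `j` from the top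
order minus one. -/
lemma abs_iteratedDeriv_le_aux {T : ℝ} (hT : 1 ≤ T) {k : ℕ} {f : ℝ → ℝ}
    (hf : ContDiff ℝ k f) (hp : ∀ x, f (x + T) = f x) (d : ℕ) :
    ∀ j, 1 ≤ j → j + 1 + d = k → ∀ x ∈ Set.Icc 0 T,
      |iteratedDeriv j f x| ≤
        T ^ (d + 1) * Real.sqrt (∫ x in (0:ℝ)..T, (iteratedDeriv k f x) ^ 2) := by
  have hT0 : 0 < T := by linarith
  have key : ∀ j, 1 ≤ j → j + 1 ≤ k → ∀ x ∈ Set.Icc 0 T,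
      |iteratedDeriv j f x| ≤ ∫ y in (0:ℝ)..T, |iteratedDeriv (j + 1) f y| := by
    intro j hj hjk x hx
    obtain ⟨i, rfl⟩ : ∃ i, j = i + 1 := ⟨j - 1, by omega⟩
    have hper : iteratedDeriv i f 0 = iteratedDeriv i f T := by
      have h := iteratedDeriv_comp_add_const i f T
      simp only [hp] at h
      simpa using congrFun h 0
    obtain ⟨z, hz, hz0⟩ := exists_deriv_eq_zero hT0
      (hf.continuous_iteratedDeriv i (by exact_mod_cast (by omega))).continuousOn hper
    rw [← iteratedDeriv_succ] at hz0
    refine abs_le_integral_of_zero hT0 (fun y => ?_)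
      (hf.continuous_iteratedDeriv _ (by exact_mod_cast hjk)) (Set.Ioo_subset_Icc_self hz) hz0 hx
    rw [iteratedDeriv_succ (n := i + 1)]
    exact (hf.differentiable_iteratedDeriv (i + 1)
      (by exact_mod_cast (by omega)) y).hasDerivAt
  induction d with
  | zero =>
    intro j hj hjk x hx
    obtain rfl : j + 1 = k := by omega
    refine (key j hj le_rfl x hx).trans ?_
    refine (integral_abs_le_sqrt hT0 (hf.continuous_iteratedDeriv _ le_rfl)).trans ?_
    gcongr
    rw [zero_add, pow_one]
    exact Real.sqrt_le_iff.2 ⟨hT0.le, by nlinarith⟩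
  | succ d ih =>
    intro j hj hjk x hx
    refine (key j hj (by omega) x hx).trans ?_
    have hc : Continuous (iteratedDeriv (j + 1) f) :=
      hf.continuous_iteratedDeriv _ (by exact_mod_cast (by omega))
    have := intervalIntegral.integral_mono_on (μ := MeasureTheory.volume) hT0.le
      (hc.abs.intervalIntegrable _ _)
      (continuous_const.intervalIntegrable _ _) (ih (j + 1) (by omega) (by omega))
    refine this.trans (le_of_eq ?_)
    simp
    ring

lemma abs_iteratedDeriv_le {T : ℝ} (hT : 1 ≤ T) {k : ℕ} {f : ℝ → ℝ}
    (hf : ContDiff ℝ k f) (hp : ∀ x, f (x + T) = f x) {j : ℕ} (hj : 1 ≤ j) (hjk : j < k)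
    {x : ℝ} (hx : x ∈ Set.Icc 0 T) :
    |iteratedDeriv j f x| ≤
      T ^ k * Real.sqrt (∫ x in (0:ℝ)..T, (iteratedDeriv k f x) ^ 2) := by
  refine (abs_iteratedDeriv_le_aux hT hf hp (k - j - 1) j hj (by omega) x hx).trans ?_
  gcongr
  omega

/-- A part of full size is the only part of its partition. -/
lemma eq_of_partSize_eq {k : ℕ} (p : OrderedFinpartition k) {m : Fin p.length}
    (hm : p.partSize m = k) (i : Fin p.length) : i = m := by
  by_contra h
  have hs : Function.Surjective (p.emb m) :=
    ((Fintype.bijective_iff_injective_and_card _).2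
      ⟨(p.emb_strictMono m).injective, by simp [hm]⟩).2
  obtain ⟨a, ha⟩ := hs (p.emb i ⟨0, p.partSize_pos i⟩)
  exact p.emb_ne_emb_of_ne (Ne.symm h) ha

/-- Product over the parts, where `a s` is the factor attached to a part of size `s`: either no
part has size `k`, or there is a single part. -/
lemma prod_partSize_le {k : ℕ} (p : OrderedFinpartition k) {a : ℕ → ℝ} {P : ℝ} (hP : 1 ≤ P)
    (ha : ∀ s, 0 ≤ a s) (hb : ∀ s, 1 ≤ s → s < k → a s ≤ P) :
    ∏ j, a (p.partSize j) ≤ P ^ k + a k := by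
  by_cases h : ∃ m, p.partSize m = k
  · obtain ⟨m, hm⟩ := h
    have : ∏ j, a (p.partSize j) = a k := by
      rw [Fintype.prod_eq_single m fun i hi => absurd (eq_of_partSize_eq p hm i) hi, hm]
    rw [this]
    have : 0 ≤ P ^ k := by positivity
    linarith
  · push Not at h
    have h1 : ∏ j, a (p.partSize j) ≤ ∏ _j : Fin p.length, P :=
      Finset.prod_le_prod (fun i _ => ha _) fun i _ =>
        hb _ (p.partSize_pos i) (lt_of_le_of_ne (p.partSize_le i) (h i))
    rw [Finset.prod_const, Finset.card_univ, Fintype.card_fin] at h1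
    have h2 := pow_le_pow_right₀ hP p.length_le
    linarith [ha k]

lemma abs_iteratedDeriv_const_mul_cos_le {c : ℝ} (hc : 0 < c) (a : ℝ) {l k : ℕ} (hl : l ≤ k)
    (x : ℝ) :
    |iteratedDeriv l (fun y => c * Real.cos (a * y)) x| ≤ c * (1 + |a|) ^ k := by
  rw [iteratedDeriv_const_mul_field, iteratedDeriv_comp_const_mul Real.contDiff_cos, abs_mul,
    abs_mul, abs_of_pos hc, abs_pow]
  gcongr
  calc |a| ^ l * |iteratedDeriv l Real.cos (a * x)| ≤ |a| ^ l * 1 := by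
        gcongr
        exact Real.abs_iteratedDeriv_cos_le_one _ _
    _ ≤ (1 + |a|) ^ l := by
        rw [mul_one]
        gcongr
        linarith
    _ ≤ (1 + |a|) ^ k := pow_le_pow_right₀ (by linarith [abs_nonneg a]) hl

lemma abs_iteratedDeriv_id_add_le {k : ℕ} {f : ℝ → ℝ} (hf : ContDiff ℝ k f) {s : ℕ}
    (hs : 1 ≤ s) (hsk : s ≤ k) (x : ℝ) :
    |iteratedDeriv s (fun y => y + f y) x| ≤ 1 + |iteratedDeriv s f x| := by
  rw [iteratedDeriv_fun_add (f := fun y => y) contDiffAt_id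
    (hf.contDiffAt.of_le (by exact_mod_cast hsk)), iteratedDeriv_fun_id]
  refine (abs_add_le _ _).trans ?_
  gcongr
  rw [if_neg (by omega)]
  split_ifs <;> simp

/-- Pointwise form of the estimate: only the top derivative of `f` is left unbounded. -/
lemma abs_iteratedDeriv_comp_le_s6 {k : ℕ} {f : ℝ → ℝ} (hf : ContDiff ℝ k f) (hk : 1 ≤ k)
    {c : ℝ} (hc : 0 < c) (a : ℝ) {P : ℝ} (hP : 0 ≤ P) {x : ℝ}
    (hb : ∀ s, 1 ≤ s → s < k → |iteratedDeriv s f x| ≤ P) :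
    |iteratedDeriv k (fun y => c * Real.cos (a * (y + f y))) x| ≤
      (Fintype.card (OrderedFinpartition k) : ℝ) *
        (c * (1 + |a|) ^ k * ((1 + P) ^ k + (1 + |iteratedDeriv k f x|))) := by
  have hg : ContDiff ℝ k (fun y => y + f y) := contDiff_id.add hf
  have hφ : ContDiff ℝ k (fun y => c * Real.cos (a * y)) := by fun_prop
  have e := iteratedDeriv_comp_eq_sum_orderedFinpartition (x := x) hφ.contDiffAt hg.contDiffAt
    le_rfl
  change |iteratedDeriv k ((fun y => c * Real.cos (a * y)) ∘ (fun y => y + f y)) x| ≤ _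
  rw [e]
  refine (Finset.abs_sum_le_sum_abs _ _).trans ?_
  refine (Finset.sum_le_card_nsmul _ _ _ fun p _ => ?_).trans (le_of_eq (nsmul_eq_mul _ _))
  rw [abs_mul, Finset.abs_prod]
  have h1 := prod_partSize_le p (a := fun s => |iteratedDeriv s (fun y => y + f y) x|)
    (P := 1 + P) (by linarith) (fun s => abs_nonneg _) fun s hs hsk =>
      (abs_iteratedDeriv_id_add_le hf hs hsk.le x).trans (by linarith [hb s hs hsk])
  have h2 := abs_iteratedDeriv_id_add_le hf hk le_rfl x
  have h3 := abs_iteratedDeriv_const_mul_cos_le hc a p.length_le (x + f x)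
  exact mul_le_mul h3 (by linarith) (Finset.prod_nonneg fun i _ => abs_nonneg _) (by positivity)

/-- Integrating a pointwise bound `|D| ≤ L (E + |u|)`. -/
lemma sqrt_integral_sq_le {T L E : ℝ} (hT : 1 ≤ T) (hL : 0 ≤ L) (hE : 0 ≤ E) {D u : ℝ → ℝ}
    (hD : Continuous D) (hu : Continuous u) (h : ∀ x ∈ Set.Icc 0 T, |D x| ≤ L * (E + |u x|)) :
    Real.sqrt (∫ x in (0:ℝ)..T, (D x) ^ 2) ≤
      L * (2 * T * (E + Real.sqrt (∫ x in (0:ℝ)..T, (u x) ^ 2))) := by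
  have hT0 : 0 ≤ T := by linarith
  set S := Real.sqrt (∫ x in (0:ℝ)..T, (u x) ^ 2) with hS
  have hS0 : 0 ≤ S := Real.sqrt_nonneg _
  have hS2 : S ^ 2 = ∫ x in (0:ℝ)..T, (u x) ^ 2 :=
    Real.sq_sqrt (intervalIntegral.integral_nonneg hT0 fun x _ => sq_nonneg _)
  have h1 : ∫ x in (0:ℝ)..T, (D x) ^ 2 ≤ ∫ x in (0:ℝ)..T, L ^ 2 * (2 * E ^ 2 + 2 * (u x) ^ 2) := by
    apply intervalIntegral.integral_mono_on hT0
    · exact Continuous.intervalIntegrable (by fun_prop) _ _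
    · exact Continuous.intervalIntegrable (by fun_prop) _ _
    · intro x hx
      calc (D x) ^ 2 = |D x| ^ 2 := (sq_abs _).symm
        _ ≤ (L * (E + |u x|)) ^ 2 := by
            gcongr
            exact h x hx
        _ = L ^ 2 * (E + |u x|) ^ 2 := by ring
        _ ≤ L ^ 2 * (2 * E ^ 2 + 2 * (u x) ^ 2) := by
            gcongr
            rw [← sq_abs (u x)]
            nlinarith [sq_nonneg (E - |u x|)]
  have h2 : ∫ x in (0:ℝ)..T, L ^ 2 * (2 * E ^ 2 + 2 * (u x) ^ 2)
      = L ^ 2 * (2 * E ^ 2 * T + 2 * S ^ 2) := by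
    rw [intervalIntegral.integral_const_mul, intervalIntegral.integral_add,
      intervalIntegral.integral_const, intervalIntegral.integral_const_mul, hS2]
    · rw [smul_eq_mul]
      ring
    all_goals exact Continuous.intervalIntegrable (by fun_prop) _ _
  refine Real.sqrt_le_iff.2 ⟨by positivity, (h1.trans h2.le).trans ?_⟩
  rw [mul_pow]
  gcongr
  have h3 : T ≤ T ^ 2 := by nlinarith
  have h4 : 1 ≤ T ^ 2 := by nlinarith
  calc 2 * E ^ 2 * T + 2 * S ^ 2 ≤ 2 * E ^ 2 * T ^ 2 + 2 * (S ^ 2 * T ^ 2) := by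
        gcongr
        exact le_mul_of_one_le_right (sq_nonneg _) h4
    _ ≤ (2 * T * (E + S)) ^ 2 := by
        have : 0 ≤ T ^ 2 * (2 * E ^ 2 + 2 * S ^ 2 + 8 * (E * S)) := by positivity
        nlinarith

/-- The key estimate in the proof of Proposition 2.7: there is `K > 0` depending only on `k`
such that for all `c > 0`, `n ∈ ℤ`, and `2π`-periodic `C^k` functions `f`,
`‖(d/dθ)^k [c·cos(n(θ+f(θ)))]‖_{L²(0,2π)} ≤ K c (1+|n|)^k (1+‖f‖_{H^k})^k`. -/
theorem key_estimate (k : ℕ) :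
    ∃ K : ℝ, 0 < K ∧ ∀ (c : ℝ), 0 < c → ∀ (n : ℤ) (f : ℝ → ℝ),
      ContDiff ℝ (k : ℕ∞) f → (∀ x : ℝ, f (x + 2 * Real.pi) = f x) →
      Real.sqrt (∫ θ in (0:ℝ)..(2 * Real.pi),
          (iteratedDeriv k (fun θ : ℝ => c * Real.cos (n * (θ + f θ))) θ) ^ 2) ≤
        K * c * (1 + (|n| : ℝ)) ^ k *
          (1 + Real.sqrt ((∫ θ in (0:ℝ)..(2 * Real.pi), (f θ) ^ 2) +
            ∫ θ in (0:ℝ)..(2 * Real.pi), (iteratedDeriv k f θ) ^ 2)) ^ k := by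
  have hT : 1 ≤ 2 * Real.pi := by linarith [Real.pi_gt_three]
  set T := 2 * Real.pi
  have hT0 : 0 < T := by linarith
  rcases Nat.eq_zero_or_pos k with rfl | hk
  · refine ⟨2 * T, by positivity, fun c hc n f hf _ => ?_⟩
    have hf' : Continuous f := hf.continuous
    have := sqrt_integral_sq_le (D := fun θ => c * Real.cos (n * (θ + f θ))) (u := fun _ => 0)
      (E := 1) hT hc.le zero_le_one (by fun_prop) continuous_const (fun x _ => by
        rw [abs_mul, abs_of_pos hc]
        gcongr
        simpa using Real.abs_cos_le_one _)
    simp only [iteratedDeriv_zero, pow_zero, mul_one]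
    refine this.trans (le_of_eq ?_)
    simp
    ring
  · set N : ℝ := (Fintype.card (OrderedFinpartition k) : ℝ)
    have hN : 0 ≤ N := Nat.cast_nonneg _
    refine ⟨(N + 1) * (2 * T * ((1 + T ^ k) ^ k + 2)), by positivity, fun c hc n f hf hp => ?_⟩
    have hf : ContDiff ℝ k f := hf
    set H := Real.sqrt ((∫ θ in (0:ℝ)..T, (f θ) ^ 2) +
      ∫ θ in (0:ℝ)..T, (iteratedDeriv k f θ) ^ 2)
    set S := Real.sqrt (∫ θ in (0:ℝ)..T, (iteratedDeriv k f θ) ^ 2) with hS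
    have hS0 : 0 ≤ S := Real.sqrt_nonneg _
    have hSH : S ≤ H := Real.sqrt_le_sqrt (le_add_of_nonneg_left
      (intervalIntegral.integral_nonneg hT0.le fun x _ => sq_nonneg _))
    have hcomp : ContDiff ℝ k (fun θ : ℝ => c * Real.cos (n * (θ + f θ))) := by fun_prop
    have hmain := sqrt_integral_sq_le (T := T) (L := N * (c * (1 + |(n : ℝ)|) ^ k))
      (E := (1 + T ^ k * S) ^ k + 1) hT (by positivity) (by positivity)
      (hcomp.continuous_iteratedDeriv k le_rfl) (hf.continuous_iteratedDeriv k le_rfl)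
      (fun x hx => (abs_iteratedDeriv_comp_le_s6 hf hk hc n (P := T ^ k * S) (by positivity)
        fun s hs hsk => abs_iteratedDeriv_le hT hf hp hs hsk hx).trans (le_of_eq (by ring)))
    rw [← hS] at hmain
    refine hmain.trans ?_
    have hB : 1 ≤ 1 + H := by linarith
    have hBk : 1 + H ≤ (1 + H) ^ k := le_self_pow₀ hB (by omega)
    have hE : (1 + T ^ k * S) ^ k ≤ (1 + T ^ k) ^ k * (1 + H) ^ k := by
      rw [← mul_pow]
      have : T ^ k * S ≤ T ^ k * H := by gcongr
      have : 0 ≤ T ^ k := by positivity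
      gcongr
      nlinarith
    have hsum : (1 + T ^ k * S) ^ k + 1 + S ≤ ((1 + T ^ k) ^ k + 2) * (1 + H) ^ k := by
      linarith
    calc N * (c * (1 + |(n : ℝ)|) ^ k) * (2 * T * ((1 + T ^ k * S) ^ k + 1 + S))
        ≤ (N + 1) * (c * (1 + |(n : ℝ)|) ^ k) *
          (2 * T * (((1 + T ^ k) ^ k + 2) * (1 + H) ^ k)) := by
          gcongr
          linarith
      _ = _ := by ring
end
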